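/- The π-encoding of the X-witness of Peirce's law is typeable: for all types A and B, letting P₀ = (ẑ (((ŷ ⟨y·δ⟩ η̂)·α) α̂ [z] ŵ ⟨w·δ⟩) δ̂)·γ, the process ⟦P₀⟧ satisfies ⟦P₀⟧ : ∅ ⊢π γ:((A⇒B)⇒A)⇒A. -/

import Mathlib

/-! # Shared development: types, X-calculus, π-calculus, encodings -/

/-- Simple (Curry) types over infinitely many basic types. -/
inductive Ty : Type
  | base : ℕ → Ty
  | arrow : Ty → Ty → Ty
  deriving DecidableEq

/-- Contexts are (partial) maps from names to types; `upd` is (compatible) extension. -/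
def upd {α : Type} [DecidableEq α] (Γ : α → Option Ty) (n : α) (A : Ty) : α → Option Ty :=
  fun m => if m = n then some A else Γ m

def emptyCtx {α : Type} : α → Option Ty := fun _ => none

/-! ## The X-calculus: nets
Sockets and plugs are each drawn from a copy of ℕ (the two namespaces are kept apart
by position: sockets are always socket arguments, plugs are plug arguments). -/

inductive Net : Type
  | cap : ℕ → ℕ → Net                      -- ⟨x·α⟩ : socket x, plug α
  | exp : ℕ → Net → ℕ → ℕ → Net            -- (x̂ P α̂)·β : binds socket x, plug α in P
  | imp : Net → ℕ → ℕ → ℕ → Net → Net      -- P α̂ [y] x̂ Q : binds α in P, x in Q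
  | cut : Net → ℕ → ℕ → Net → Net          -- P α̂ † x̂ Q
  | cutL : Net → ℕ → ℕ → Net → Net         -- P α̂ †← x̂ Q
  | cutR : Net → ℕ → ℕ → Net → Net         -- P α̂ →† x̂ Q
  deriving DecidableEq

/-- Free sockets of a net. -/
def fs : Net → Finset ℕ
  | .cap x _ => {x}
  | .exp x P _ _ => fs P \ {x}
  | .imp P _ y x Q => fs P ∪ {y} ∪ (fs Q \ {x})
  | .cut P _ x Q => fs P ∪ (fs Q \ {x})
  | .cutL P _ x Q => fs P ∪ (fs Q \ {x})
  | .cutR P _ x Q => fs P ∪ (fs Q \ {x})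

/-- Free plugs of a net. -/
def fp : Net → Finset ℕ
  | .cap _ a => {a}
  | .exp _ P a b => (fp P \ {a}) ∪ {b}
  | .imp P a _ _ Q => (fp P \ {a}) ∪ fp Q
  | .cut P a _ Q => (fp P \ {a}) ∪ fp Q
  | .cutL P a _ Q => (fp P \ {a}) ∪ fp Q
  | .cutR P a _ Q => (fp P \ {a}) ∪ fp Q

/-- `P` introduces the socket `x`. -/
def IntroS : Net → ℕ → Prop
  | .cap y _, x => y = x
  | .imp Q _ y _ R, x => y = x ∧ x ∉ fs Q ∪ fs R
  | _, _ => False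

/-- `P` introduces the plug `α`. -/
def IntroP : Net → ℕ → Prop
  | .cap _ b, a => b = a
  | .exp _ Q _ c, a => c = a ∧ a ∉ fp Q
  | _, _ => False

/-- Rename every free occurrence of the plug `d` in `P` to `a`  (P[a/d]). -/
def renP : Net → ℕ → ℕ → Net
  | .cap x b, d, a => .cap x (if b = d then a else b)
  | .exp x P b c, d, a => .exp x (if b = d then P else renP P d a) b (if c = d then a else c)
  | .imp P b y x Q, d, a => .imp (if b = d then P else renP P d a) b y x (renP Q d a)
  | .cut P b x Q, d, a => .cut (if b = d then P else renP P d a) b x (renP Q d a)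
  | .cutL P b x Q, d, a => .cutL (if b = d then P else renP P d a) b x (renP Q d a)
  | .cutR P b x Q, d, a => .cutR (if b = d then P else renP P d a) b x (renP Q d a)

/-- Rename every free occurrence of the socket `x` in `P` to `z`  (P[z/x]). -/
def renS : Net → ℕ → ℕ → Net
  | .cap y b, x, z => .cap (if y = x then z else y) b
  | .exp y P b c, x, z => .exp y (if y = x then P else renS P x z) b c
  | .imp P b y w Q, x, z =>
      .imp (renS P x z) b (if y = x then z else y) w (if w = x then Q else renS Q x z)
  | .cut P b w Q, x, z => .cut (renS P x z) b w (if w = x then Q else renS Q x z)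
  | .cutL P b w Q, x, z => .cutL (renS P x z) b w (if w = x then Q else renS Q x z)
  | .cutR P b w Q, x, z => .cutR (renS P x z) b w (if w = x then Q else renS Q x z)

/-- One-step reduction of X (compatible closure of the rules). -/
inductive StepX : Net → Net → Prop
  -- logical rules (α introduced on the left, x introduced on the right)
  | cap_cap (y a x b : ℕ) :
      StepX (.cut (.cap y a) a x (.cap x b)) (.cap y b)
  | exp_cap (y : ℕ) (P : Net) (b a x c : ℕ) (h : a ∉ fp P) :
      StepX (.cut (.exp y P b a) a x (.cap x c)) (.exp y P b c)
  | cap_imp (y a x : ℕ) (Q : Net) (b z : ℕ) (R : Net) (h : x ∉ fs Q ∪ fs R) :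
      StepX (.cut (.cap y a) a x (.imp Q b x z R)) (.imp Q b y z R)
  | exp_imp₁ (y : ℕ) (P : Net) (b a x : ℕ) (Q : Net) (c z : ℕ) (R : Net)
      (h1 : a ∉ fp P) (h2 : x ∉ fs Q ∪ fs R) :
      StepX (.cut (.exp y P b a) a x (.imp Q c x z R)) (.cut Q c y (.cut P b z R))
  | exp_imp₂ (y : ℕ) (P : Net) (b a x : ℕ) (Q : Net) (c z : ℕ) (R : Net)
      (h1 : a ∉ fp P) (h2 : x ∉ fs Q ∪ fs R) :
      StepX (.cut (.exp y P b a) a x (.imp Q c x z R)) (.cut (.cut Q c y P) b z R)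
  -- activation
  | actL (P : Net) (a x : ℕ) (Q : Net) (h : ¬ IntroP P a) :
      StepX (.cut P a x Q) (.cutL P a x Q)
  | actR (P : Net) (a x : ℕ) (Q : Net) (h : ¬ IntroS Q x) :
      StepX (.cut P a x Q) (.cutR P a x Q)
  -- left propagation
  | dL (y a x : ℕ) (P : Net) :
      StepX (.cutL (.cap y a) a x P) (.cut (.cap y a) a x P)
  | capL (y b a x : ℕ) (P : Net) (h : b ≠ a) :
      StepX (.cutL (.cap y b) a x P) (.cap y b)
  | exp_outsL (y : ℕ) (Q : Net) (b a x : ℕ) (P : Net) (c : ℕ)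
      (h : c ∉ fp Q ∪ fp P ∧ c ≠ a ∧ c ≠ b) :
      StepX (.cutL (.exp y Q b a) a x P) (.cut (.exp y (.cutL Q a x P) b c) c x P)
  | exp_insL (y : ℕ) (Q : Net) (b c a x : ℕ) (P : Net) (h : c ≠ a) :
      StepX (.cutL (.exp y Q b c) a x P) (.exp y (.cutL Q a x P) b c)
  | impL (Q : Net) (b z y a x : ℕ) (R P : Net) :
      StepX (.cutL (.imp Q b z y R) a x P) (.imp (.cutL Q a x P) b z y (.cutL R a x P))
  | cut_cutL (Q : Net) (b y a x : ℕ) (R P : Net) :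
      StepX (.cutL (.cut Q b y R) a x P) (.cut (.cutL Q a x P) b y (.cutL R a x P))
  -- right propagation
  | dR (P : Net) (a x b : ℕ) :
      StepX (.cutR P a x (.cap x b)) (.cut P a x (.cap x b))
  | capR (P : Net) (a x y b : ℕ) (h : y ≠ x) :
      StepX (.cutR P a x (.cap y b)) (.cap y b)
  | expR (P : Net) (a x y : ℕ) (Q : Net) (b c : ℕ) :
      StepX (.cutR P a x (.exp y Q b c)) (.exp y (.cutR P a x Q) b c)
  | imp_outsR (P : Net) (a x : ℕ) (Q : Net) (b y : ℕ) (R : Net) (z : ℕ)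
      (h : z ∉ fs P ∪ fs Q ∪ fs R ∧ z ≠ x ∧ z ≠ y) :
      StepX (.cutR P a x (.imp Q b x y R))
            (.cut P a z (.imp (.cutR P a x Q) b z y (.cutR P a x R)))
  | imp_insR (P : Net) (a x : ℕ) (Q : Net) (b z y : ℕ) (R : Net) (h : z ≠ x) :
      StepX (.cutR P a x (.imp Q b z y R)) (.imp (.cutR P a x Q) b z y (.cutR P a x R))
  | cut_cutR (P : Net) (a x : ℕ) (Q : Net) (b y : ℕ) (R : Net) :
      StepX (.cutR P a x (.cut Q b y R)) (.cut (.cutR P a x Q) b y (.cutR P a x R))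
  -- compatibility (closure under contexts)
  | expC (x : ℕ) {P P' : Net} (a b : ℕ) (h : StepX P P') : StepX (.exp x P a b) (.exp x P' a b)
  | impC₁ {P P' : Net} (a y x : ℕ) (Q : Net) (h : StepX P P') :
      StepX (.imp P a y x Q) (.imp P' a y x Q)
  | impC₂ (P : Net) (a y x : ℕ) {Q Q' : Net} (h : StepX Q Q') :
      StepX (.imp P a y x Q) (.imp P a y x Q')
  | cutC₁ {P P' : Net} (a x : ℕ) (Q : Net) (h : StepX P P') :
      StepX (.cut P a x Q) (.cut P' a x Q)
  | cutC₂ (P : Net) (a x : ℕ) {Q Q' : Net} (h : StepX Q Q') :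
      StepX (.cut P a x Q) (.cut P a x Q')
  | cutLC₁ {P P' : Net} (a x : ℕ) (Q : Net) (h : StepX P P') :
      StepX (.cutL P a x Q) (.cutL P' a x Q)
  | cutLC₂ (P : Net) (a x : ℕ) {Q Q' : Net} (h : StepX Q Q') :
      StepX (.cutL P a x Q) (.cutL P a x Q')
  | cutRC₁ {P P' : Net} (a x : ℕ) (Q : Net) (h : StepX P P') :
      StepX (.cutR P a x Q) (.cutR P' a x Q)
  | cutRC₂ (P : Net) (a x : ℕ) {Q Q' : Net} (h : StepX Q Q') :
      StepX (.cutR P a x Q) (.cutR P a x Q')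

/-- Multistep reduction of X: reflexive, transitive (and compatible) closure. -/
def RedX : Net → Net → Prop := Relation.ReflTransGen StepX

/-- Type assignment for X:  P ··· Γ ⊢ Δ  (Γ a context of sockets, Δ of plugs). -/
inductive TypesX : Net → (ℕ → Option Ty) → (ℕ → Option Ty) → Prop
  | cap (Γ Δ : ℕ → Option Ty) (y a : ℕ) (A : Ty) :
      TypesX (.cap y a) (upd Γ y A) (upd Δ a A)
  | exp {P : Net} {Γ Δ : ℕ → Option Ty} {x a : ℕ} {A B : Ty} (b : ℕ)
      (h : TypesX P (upd Γ x A) (upd Δ a B)) :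
      TypesX (.exp x P a b) Γ (upd Δ b (Ty.arrow A B))
  | imp {P Q : Net} {Γ Δ : ℕ → Option Ty} {a x : ℕ} {A B : Ty} (y : ℕ)
      (h1 : TypesX P Γ (upd Δ a A)) (h2 : TypesX Q (upd Γ x B) Δ) :
      TypesX (.imp P a y x Q) (upd Γ y (Ty.arrow A B)) Δ
  | cut {P Q : Net} {Γ Δ : ℕ → Option Ty} {a x : ℕ} {A : Ty}
      (h1 : TypesX P Γ (upd Δ a A)) (h2 : TypesX Q (upd Γ x A) Δ) :
      TypesX (.cut P a x Q) Γ Δ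
  | cutL {P Q : Net} {Γ Δ : ℕ → Option Ty} {a x : ℕ} {A : Ty}
      (h1 : TypesX P Γ (upd Δ a A)) (h2 : TypesX Q (upd Γ x A) Δ) :
      TypesX (.cutL P a x Q) Γ Δ
  | cutR {P Q : Net} {Γ Δ : ℕ → Option Ty} {a x : ℕ} {A : Ty}
      (h1 : TypesX P Γ (upd Δ a A)) (h2 : TypesX Q (upd Γ x A) Δ) :
      TypesX (.cutR P a x Q) Γ Δ

/-! ## The asynchronous π-calculus with pairing and non-blocking input -/

/-- π-names: the sockets and plugs of X, plus internal variables. -/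
inductive PName : Type
  | sock : ℕ → PName
  | plug : ℕ → PName
  | var : ℕ → PName
  deriving DecidableEq

/-- Data: a name or a pair of names (pairing is not recursive). -/
inductive PData : Type
  | name : PName → PData
  | pair : PName → PName → PData
  deriving DecidableEq

inductive Proc : Type
  | nil : Proc
  | par : Proc → Proc → Proc
  | repl : Proc → Proc
  | nu : PName → Proc → Proc
  | inp : PName → PName → Proc → Proc          -- a(x).P
  | out : PName → PData → Proc                 -- a⟨p⟩ (asynchronous)
  | letp : PName → PName → PData → Proc → Proc -- let ⟨x,y⟩ = d in P
  deriving DecidableEq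

def fnD : PData → Finset PName
  | .name a => {a}
  | .pair a b => {a, b}

/-- Free names of a process. -/
def fn : Proc → Finset PName
  | .nil => ∅
  | .par P Q => fn P ∪ fn Q
  | .repl P => fn P
  | .nu a P => fn P \ {a}
  | .inp a x P => {a} ∪ (fn P \ {x})
  | .out a p => {a} ∪ fnD p
  | .letp x y d P => fnD d ∪ (fn P \ {x, y})

/-- Substitute datum `p` for name `x` in a name position. -/
def applyN (x : PName) (p : PData) (n : PName) : PName :=
  if n = x then (match p with | .name b => b | .pair _ _ => n) else n

/-- Substitute datum `p` for name `x` in a datum. -/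
def applyD (x : PName) (p : PData) : PData → PData
  | .name n => if n = x then p else .name n
  | .pair a b => .pair (applyN x p a) (applyN x p b)

/-- Substitution of a datum for a free name in a process:  P[p/x]. -/
def psubst : Proc → PName → PData → Proc
  | .nil, _, _ => .nil
  | .par P Q, x, p => .par (psubst P x p) (psubst Q x p)
  | .repl P, x, p => .repl (psubst P x p)
  | .nu a P, x, p => if a = x then .nu a P else .nu a (psubst P x p)
  | .inp a y P, x, p => .inp (applyN x p a) y (if y = x then P else psubst P x p)
  | .out a q, x, p => .out (applyN x p a) (applyD x p q)
  | .letp u v d P, x, p => .letp u v (applyD x p d) (if u = x ∨ v = x then P else psubst P x p)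

/-- Structural congruence. -/
inductive Cong : Proc → Proc → Prop
  | parNil (P : Proc) : Cong (.par P .nil) P
  | parComm (P Q : Proc) : Cong (.par P Q) (.par Q P)
  | parAssoc (P Q R : Proc) : Cong (.par (.par P Q) R) (.par P (.par Q R))
  | nuNil (n : PName) : Cong (.nu n .nil) .nil
  | nuComm (m n : PName) (P : Proc) : Cong (.nu m (.nu n P)) (.nu n (.nu m P))
  | nuPar (n : PName) (P Q : Proc) (h : n ∉ fn P) : Cong (.nu n (.par P Q)) (.par P (.nu n Q))
  | replUnfold (P : Proc) : Cong (.repl P) (.par P (.repl P))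
  | letPair (x y a b : PName) (R : Proc) :
      Cong (.letp x y (.pair a b) R) (psubst (psubst R x (.name a)) y (.name b))
  | refl (P : Proc) : Cong P P
  | symm {P Q : Proc} : Cong P Q → Cong Q P
  | trans {P Q R : Proc} : Cong P Q → Cong Q R → Cong P R
  | parC₁ {P P' : Proc} (Q : Proc) : Cong P P' → Cong (.par P Q) (.par P' Q)
  | parC₂ (P : Proc) {Q Q' : Proc} : Cong Q Q' → Cong (.par P Q) (.par P Q')
  | replC {P P' : Proc} : Cong P P' → Cong (.repl P) (.repl P')
  | nuC (n : PName) {P P' : Proc} : Cong P P' → Cong (.nu n P) (.nu n P')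
  | inpC (a x : PName) {P P' : Proc} : Cong P P' → Cong (.inp a x P) (.inp a x P')
  | letC (x y : PName) (d : PData) {P P' : Proc} :
      Cong P P' → Cong (.letp x y d P) (.letp x y d P')

/-- One-step reduction of π (with non-blocking input). -/
inductive StepPi : Proc → Proc → Prop
  | comm (a : PName) (p : PData) (x : PName) (Q : Proc) :
      StepPi (.par (.out a p) (.inp a x Q)) (psubst Q x p)
  | nu (n : PName) {P P' : Proc} : StepPi P P' → StepPi (.nu n P) (.nu n P')
  | parL {P P' : Proc} (Q : Proc) : StepPi P P' → StepPi (.par P Q) (.par P' Q)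
  | inp (n x : PName) {P Q : Proc} : StepPi P Q → StepPi (.inp n x P) (.inp n x Q)
  | congr {P P' Q Q' : Proc} : Cong P P' → StepPi P' Q' → Cong Q' Q → StepPi P Q

/-- →π+ : the reflexive transitive closure of one-step π reduction. -/
def RedPi : Proc → Proc → Prop := Relation.ReflTransGen StepPi

def nuList : List PName → Proc → Proc
  | [], P => P
  | b :: bs, P => .nu b (nuList bs P)

/-- P↓n : P exhibits a barb on n. -/
def Barb (P : Proc) (n : PName) : Prop :=
  ∃ (bs : List PName) (p : PData) (Q : Proc), n ∉ bs ∧ Cong P (nuList bs (.par (.out n p) Q))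

/-- P⇓n : P weakly exhibits a barb on n. -/
def WeakBarb (P : Proc) (n : PName) : Prop := ∃ P', RedPi P P' ∧ Barb P' n

/-- Process contexts. -/
inductive PCtxt : Type
  | hole : PCtxt
  | parL : PCtxt → Proc → PCtxt
  | parR : Proc → PCtxt → PCtxt
  | repl : PCtxt → PCtxt
  | nu : PName → PCtxt → PCtxt
  | inp : PName → PName → PCtxt → PCtxt
  | letp : PName → PName → PData → PCtxt → PCtxt

def fill : PCtxt → Proc → Proc
  | .hole, P => P
  | .parL C Q, P => .par (fill C P) Q
  | .parR Q C, P => .par Q (fill C P)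
  | .repl C, P => .repl (fill C P)
  | .nu n C, P => .nu n (fill C P)
  | .inp a x C, P => .inp a x (fill C P)
  | .letp x y d C, P => .letp x y d (fill C P)

/-- R is a barbed contextual simulation. -/
def IsSim (R : Proc → Proc → Prop) : Prop :=
  ∀ P Q, R P Q →
    (∀ n, Barb P n → WeakBarb Q n) ∧
    (∀ C P', StepPi (fill C P) P' → ∃ Q', RedPi (fill C Q) Q' ∧ R P' Q')

/-- P ≾ Q : barbed contextual simulation (largest simulation). -/
def BarbedSim (P Q : Proc) : Prop := ∃ R, IsSim R ∧ R P Q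

/-- Type assignment for π:  P : Γ ⊢π Δ. -/
inductive TypesPi : Proc → (PName → Option Ty) → (PName → Option Ty) → Prop
  | nil (Γ Δ : PName → Option Ty) : TypesPi .nil Γ Δ
  | repl {P : Proc} {Γ Δ : PName → Option Ty} : TypesPi P Γ Δ → TypesPi (.repl P) Γ Δ
  | nu {P : Proc} {Γ Δ : PName → Option Ty} {a : PName} {A : Ty} :
      TypesPi P (upd Γ a A) (upd Δ a A) → TypesPi (.nu a P) Γ Δ
  | par {P Q : Proc} {Γ Δ : PName → Option Ty} :
      TypesPi P Γ Δ → TypesPi Q Γ Δ → TypesPi (.par P Q) Γ Δ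
  | inp {P : Proc} {Γ Δ : PName → Option Ty} {x : PName} {A : Ty} (a : PName)
      (h : TypesPi P (upd Γ x A) (upd Δ x A)) : TypesPi (.inp a x P) (upd Γ a A) Δ
  | out (Γ Δ : PName → Option Ty) (a b : PName) (A : Ty) :
      TypesPi (.out a (.name b)) (upd Γ b A) (upd (upd Δ b A) a A)
  | pairOut (Γ Δ : PName → Option Ty) (a b c : PName) (A B : Ty) :
      TypesPi (.out a (.pair b c)) (upd Γ b A) (upd (upd Δ c B) a (Ty.arrow A B))
  | letp {P : Proc} {Γ Δ : PName → Option Ty} {x y : PName} {A B : Ty} (z : PName)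
      (h : TypesPi P (upd Γ y B) (upd Δ x A)) :
      TypesPi (.letp x y (.name z) P) (upd Γ z (Ty.arrow A B)) Δ

/-! ## The encoding of X into π -/

/-- Forwarder a=b := a(o).b⟨o⟩. -/
def fwd (a b : PName) : Proc := .inp a (.var 0) (.out b (.name (.var 0)))

/-- ⟦P α̂†x̂Q⟧ = (να)(⟦P⟧ | !(νx)(α=x | ⟦Q⟧)) | (νx)(!(να)(⟦P⟧ | α=x) | ⟦Q⟧). -/
def encCut (p : Proc) (a x : ℕ) (q : Proc) : Proc :=
  .par (.nu (.plug a) (.par p (.repl (.nu (.sock x) (.par (fwd (.plug a) (.sock x)) q)))))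
       (.nu (.sock x) (.par (.repl (.nu (.plug a) (.par p (fwd (.plug a) (.sock x))))) q))

/-- The encoding ⟦·⟧ of X-nets into π-processes. -/
def encX : Net → Proc
  | .cap x a => fwd (.sock x) (.plug a)
  | .exp y Q b a =>
      .nu (.sock y) (.nu (.plug b)
        (.par (encX Q) (.out (.plug a) (.pair (.sock y) (.plug b)))))
  | .imp P a y x Q =>
      .inp (.sock y) (.var 0) (.letp (.var 1) (.var 2) (.name (.var 0))
        (.par (.nu (.plug a) (.repl (.par (encX P) (fwd (.plug a) (.var 1)))))
              (.nu (.sock x) (.repl (.par (fwd (.var 2) (.sock x)) (encX Q))))))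
  | .cut P a x Q => encCut (encX P) a x (encX Q)
  | .cutL P a x Q => encCut (encX P) a x (encX Q)
  | .cutR P a x Q => encCut (encX P) a x (encX Q)

/-- View an X socket-context as a π context. -/
def sockCtx (Γ : ℕ → Option Ty) : PName → Option Ty
  | .sock n => Γ n
  | _ => none

/-- View an X plug-context as a π context. -/
def plugCtx (Δ : ℕ → Option Ty) : PName → Option Ty
  | .plug n => Δ n
  | _ => none

/-! ## The λ-calculus -/

inductive Lam : Type
  | var : ℕ → Lam
  | abs : ℕ → Lam → Lam
  | app : Lam → Lam → Lam
  deriving DecidableEq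

/-- Substitution M[N/x]. -/
def lsubst : Lam → ℕ → Lam → Lam
  | .var y, x, N => if y = x then N else .var y
  | .abs y M, x, N => if y = x then .abs y M else .abs y (lsubst M x N)
  | .app M₁ M₂, x, N => .app (lsubst M₁ x N) (lsubst M₂ x N)

/-- One-step β-reduction. -/
inductive Beta : Lam → Lam → Prop
  | beta (x : ℕ) (M N : Lam) : Beta (.app (.abs x M) N) (lsubst M x N)
  | appL {M M' : Lam} (N : Lam) : Beta M M' → Beta (.app M N) (.app M' N)
  | appR (M : Lam) {N N' : Lam} : Beta N N' → Beta (.app M N) (.app M N')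
  | abs (x : ℕ) {M M' : Lam} : Beta M M' → Beta (.abs x M) (.abs x M')

/-- Simple type assignment for λ. -/
inductive TypesLam : (ℕ → Option Ty) → Lam → Ty → Prop
  | var {Γ : ℕ → Option Ty} {x : ℕ} {A : Ty} : Γ x = some A → TypesLam Γ (.var x) A
  | abs {Γ : ℕ → Option Ty} {x : ℕ} {M : Lam} {A B : Ty} :
      TypesLam (upd Γ x A) M B → TypesLam Γ (.abs x M) (Ty.arrow A B)
  | app {Γ : ℕ → Option Ty} {M N : Lam} {A B : Ty} :
      TypesLam Γ M (Ty.arrow A B) → TypesLam Γ N A → TypesLam Γ (.app M N) B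

/-- Interpretation of λ into X, with a supply `n` of fresh connectors:
all connectors generated are ≥ n.  ⟦x⟧α = ⟨x·α⟩; ⟦λx.M⟧α = (x̂ ⟦M⟧β β̂)·α (β fresh);
⟦MN⟧α = ⟦M⟧γ γ̂ † x̂ (⟦N⟧β β̂ [x] ŷ ⟨y·α⟩) (γ,β,x,y fresh). -/
def encLamAux : Lam → ℕ → ℕ → Net × ℕ
  | .var x, a, n => (.cap x a, n)
  | .abs x M, a, n =>
      let r := encLamAux M n (n + 1)
      (.exp x r.1 n a, r.2)
  | .app M N, a, n =>
      let r := encLamAux M n (n + 2)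
      let s := encLamAux N (n + 1) r.2
      (.cut r.1 n n (.imp s.1 (n + 1) n (n + 1) (.cap (n + 1) a)), s.2)

/-- A bound above all variables occurring in a λ-term. -/
def lamFresh : Lam → ℕ
  | .var x => x + 1
  | .abs x M => max (x + 1) (lamFresh M)
  | .app M N => max (lamFresh M) (lamFresh N)

/-- ⟦M⟧α : the interpretation of λ into X (fresh names chosen above all of M and α). -/
def encLam (M : Lam) (a : ℕ) : Net := (encLamAux M a (max (lamFresh M) (a + 1))).1

/-- ⟦M⟧πα = ⟦⟦M⟧α⟧ : the interpretation of λ into π via X. -/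
def encLamPi (M : Lam) (a : ℕ) : Proc := encX (encLam M a)

/-! The witness is typed in X by the evident derivation, and the encoding preserves typing: the
scopes in which it places the encoded subnets bind only names fresh for their contexts, so the
typings of the subnets can be weakened to those scopes. -/

/-- Context inclusion: `Γ'` contains every statement `n : A` of `Γ`. -/
def SubCtx {α : Type} (Γ Γ' : α → Option Ty) : Prop :=
  ∀ ⦃n : α⦄ ⦃A : Ty⦄, Γ n = some A → Γ' n = some A

/-- Type assignment for X with compatible context extension, under Barendregt's convention.
Where `TypesX` extends a context, possibly overwriting it, this judgement looks the name up, so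
that no free connector is used at two types; bound connectors are required to be fresh exactly
where `encX` would otherwise capture them. It is the hypothesis under which `encX` preserves
typing. -/
inductive CompatTypesX : Net → (ℕ → Option Ty) → (ℕ → Option Ty) → Prop
  | cap {Γ Δ : ℕ → Option Ty} {x a : ℕ} {A : Ty} (hx : Γ x = some A) (ha : Δ a = some A) :
      CompatTypesX (.cap x a) Γ Δ
  | exp {P : Net} {Γ Δ : ℕ → Option Ty} {x a b : ℕ} {A B : Ty} (hb : Δ b = some (.arrow A B))
      (hba : b ≠ a) (hP : CompatTypesX P (upd Γ x A) (upd Δ a B)) :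
      CompatTypesX (.exp x P a b) Γ Δ
  | imp {P Q : Net} {Γ Δ : ℕ → Option Ty} {a y x : ℕ} {A B : Ty} (hy : Γ y = some (.arrow A B))
      (hP : CompatTypesX P Γ (upd Δ a A)) (hQ : CompatTypesX Q (upd Γ x B) Δ) :
      CompatTypesX (.imp P a y x Q) Γ Δ
  | cut {P Q : Net} {Γ Δ : ℕ → Option Ty} {a x : ℕ} {A : Ty} (ha : Δ a = none) (hx : Γ x = none)
      (hP : CompatTypesX P Γ (upd Δ a A)) (hQ : CompatTypesX Q (upd Γ x A) Δ) :
      CompatTypesX (.cut P a x Q) Γ Δ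
  | cutL {P Q : Net} {Γ Δ : ℕ → Option Ty} {a x : ℕ} {A : Ty} (ha : Δ a = none) (hx : Γ x = none)
      (hP : CompatTypesX P Γ (upd Δ a A)) (hQ : CompatTypesX Q (upd Γ x A) Δ) :
      CompatTypesX (.cutL P a x Q) Γ Δ
  | cutR {P Q : Net} {Γ Δ : ℕ → Option Ty} {a x : ℕ} {A : Ty} (ha : Δ a = none) (hx : Γ x = none)
      (hP : CompatTypesX P Γ (upd Δ a A)) (hQ : CompatTypesX Q (upd Γ x A) Δ) :
      CompatTypesX (.cutR P a x Q) Γ Δ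

theorem upd_self {α : Type} [DecidableEq α] {Γ : α → Option Ty} {n : α} {A : Ty} :
    upd Γ n A n = some A :=
  if_pos rfl

theorem upd_of_ne {α : Type} [DecidableEq α] {Γ : α → Option Ty} {m n : α} {A : Ty} (h : m ≠ n) :
    upd Γ n A m = Γ m :=
  if_neg h

theorem upd_eq_self {α : Type} [DecidableEq α] {Γ : α → Option Ty} {n : α} {A : Ty}
    (h : Γ n = some A) : upd Γ n A = Γ := by
  funext m
  obtain rfl | hm := eq_or_ne m n
  · rw [upd_self, h]
  · exact upd_of_ne hm

theorem sockCtx_emptyCtx : sockCtx emptyCtx = emptyCtx := by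
  funext n
  cases n <;> rfl

theorem plugCtx_emptyCtx : plugCtx emptyCtx = emptyCtx := by
  funext n
  cases n <;> rfl

theorem sockCtx_upd (Γ : ℕ → Option Ty) (n : ℕ) (A : Ty) :
    sockCtx (upd Γ n A) = upd (sockCtx Γ) (.sock n) A := by
  funext m
  cases m <;> simp [sockCtx, upd]

theorem plugCtx_upd (Δ : ℕ → Option Ty) (n : ℕ) (A : Ty) :
    plugCtx (upd Δ n A) = upd (plugCtx Δ) (.plug n) A := by
  funext m
  cases m <;> simp [plugCtx, upd]

namespace SubCtx

theorem refl {α : Type} (Γ : α → Option Ty) : SubCtx Γ Γ :=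
  fun _ _ h => h

variable {α : Type} [DecidableEq α] {Γ Γ' : α → Option Ty} {n : α} {A : Ty}

theorem upd_right (h : SubCtx Γ Γ') (hn : Γ n = none) (A : Ty) : SubCtx Γ (upd Γ' n A) := by
  intro m B hm
  have hmn : m ≠ n := by
    rintro rfl
    simp [hn] at hm
  rw [upd_of_ne hmn, h hm]

theorem upd_upd (h : SubCtx Γ Γ') : SubCtx (upd Γ n A) (upd Γ' n A) := by
  intro m B hm
  obtain rfl | hmn := eq_or_ne m n
  · rwa [upd_self] at hm ⊢
  · rw [upd_of_ne hmn] at hm ⊢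
    exact h hm

-- The premises of `TypesPi.inp` and `TypesPi.letp` see `Γ`, not `upd Γ n A`, and may use `n` at
-- another type; so `Γ₁` agrees with `Γ` at `n` and with `Γ'` elsewhere.
theorem exists_upd_eq (h : SubCtx (upd Γ n A) Γ') : ∃ Γ₁, SubCtx Γ Γ₁ ∧ upd Γ₁ n A = Γ' := by
  refine ⟨Function.update Γ' n (Γ n), fun m B hm => ?_, funext fun m => ?_⟩
  · obtain rfl | hmn := eq_or_ne m n
    · rwa [Function.update_self]
    · rw [Function.update_of_ne hmn]
      exact h ((upd_of_ne hmn).trans hm)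
  · obtain rfl | hmn := eq_or_ne m n
    · rw [upd_self, h upd_self]
    · rw [upd_of_ne hmn, Function.update_of_ne hmn]

end SubCtx

namespace TypesPi

variable {P Q : Proc} {Γ Δ : PName → Option Ty} {a b c x y z : PName} {A B : Ty}

theorem inp_of_eq_some (ha : Γ a = some A) (h : TypesPi P (upd Γ x A) (upd Δ x A)) :
    TypesPi (.inp a x P) Γ Δ := by
  simpa only [upd_eq_self ha] using TypesPi.inp a h

theorem out_of_eq_some (hb : Γ b = some A) (hb' : Δ b = some A) (ha : Δ a = some A) :
    TypesPi (.out a (.name b)) Γ Δ := by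
  simpa only [upd_eq_self hb, upd_eq_self hb', upd_eq_self ha] using TypesPi.out Γ Δ a b A

theorem pairOut_of_eq_some (hb : Γ b = some A) (hc : Δ c = some B)
    (ha : Δ a = some (.arrow A B)) : TypesPi (.out a (.pair b c)) Γ Δ := by
  simpa only [upd_eq_self hb, upd_eq_self hc, upd_eq_self ha] using TypesPi.pairOut Γ Δ a b c A B

theorem letp_of_eq_some (hz : Γ z = some (.arrow A B))
    (h : TypesPi P (upd Γ y B) (upd Δ x A)) : TypesPi (.letp x y (.name z) P) Γ Δ := by
  simpa only [upd_eq_self hz] using TypesPi.letp z h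

theorem weaken (h : TypesPi P Γ Δ) {Γ' Δ' : PName → Option Ty} (hΓ : SubCtx Γ Γ')
    (hΔ : SubCtx Δ Δ') : TypesPi P Γ' Δ' := by
  induction h generalizing Γ' Δ' with
  | nil => exact .nil _ _
  | repl _ ih => exact .repl (ih hΓ hΔ)
  | nu _ ih => exact .nu (ih hΓ.upd_upd hΔ.upd_upd)
  | par _ _ ihP ihQ => exact .par (ihP hΓ hΔ) (ihQ hΓ hΔ)
  | inp a _ ih =>
    obtain ⟨Γ₁, hΓ₁, rfl⟩ := hΓ.exists_upd_eq
    exact .inp a (ih hΓ₁.upd_upd hΔ.upd_upd)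
  | out Γ Δ a b A =>
    obtain ⟨Γ₁, -, rfl⟩ := hΓ.exists_upd_eq
    obtain ⟨Δ₁, hΔ₁, rfl⟩ := hΔ.exists_upd_eq
    obtain ⟨Δ₂, -, rfl⟩ := hΔ₁.exists_upd_eq
    exact .out Γ₁ Δ₂ a b A
  | pairOut Γ Δ a b c A B =>
    obtain ⟨Γ₁, -, rfl⟩ := hΓ.exists_upd_eq
    obtain ⟨Δ₁, hΔ₁, rfl⟩ := hΔ.exists_upd_eq
    obtain ⟨Δ₂, -, rfl⟩ := hΔ₁.exists_upd_eq
    exact .pairOut Γ₁ Δ₂ a b c A B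
  | letp z _ ih =>
    obtain ⟨Γ₁, hΓ₁, rfl⟩ := hΓ.exists_upd_eq
    exact .letp z (ih hΓ₁.upd_upd hΔ.upd_upd)

theorem fwd (ha : Γ a = some A) (hb : Δ b = some A) : TypesPi (fwd a b) Γ Δ := by
  have hb' : upd Δ (.var 0) A b = some A := by
    obtain rfl | hb₀ := eq_or_ne b (.var 0)
    · exact upd_self
    · rwa [upd_of_ne hb₀]
  exact inp_of_eq_some ha (out_of_eq_some upd_self upd_self hb')

theorem encCut {a x : ℕ} (hΓa : Γ (.plug a) = none) (hΔa : Δ (.plug a) = none)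
    (hΓx : Γ (.sock x) = none) (hΔx : Δ (.sock x) = none)
    (hP : TypesPi P Γ (upd Δ (.plug a) A)) (hQ : TypesPi Q (upd Γ (.sock x) A) Δ) :
    TypesPi (encCut P a x Q) Γ Δ := by
  have hΓ := SubCtx.refl Γ
  have hΔ := SubCtx.refl Δ
  have hP₁ := hP.weaken (hΓ.upd_right hΓa A) (.refl _)
  have hP₂ := hP.weaken ((hΓ.upd_right hΓx A).upd_right hΓa A) (hΔ.upd_right hΔx A).upd_upd
  have hQ₁ := hQ.weaken (.refl _) (hΔ.upd_right hΔx A)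
  have hQ₂ := hQ.weaken (hΓ.upd_right hΓa A).upd_upd ((hΔ.upd_right hΔa A).upd_right hΔx A)
  exact .par (.nu (.par hP₁ (.repl (.nu (.par (fwd upd_self upd_self) hQ₂)))))
    (.nu (.par (.repl (.nu (.par hP₂ (fwd upd_self upd_self)))) hQ₁))

end TypesPi

theorem CompatTypesX.typesPi_encX {P : Net} {Γ Δ : ℕ → Option Ty} (h : CompatTypesX P Γ Δ) :
    TypesPi (encX P) (sockCtx Γ) (plugCtx Δ) := by
  induction h with
  | cap hx ha => exact .fwd hx ha
  | @exp P Γ Δ x a b A B hb hba _ ih =>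
    rw [sockCtx_upd, plugCtx_upd] at ih
    have hba' : PName.plug b ≠ .plug a := by simpa only [ne_eq, PName.plug.injEq] using hba
    have hΓ : SubCtx (upd (sockCtx Γ) (.sock x) A)
        (upd (upd (sockCtx Γ) (.sock x) A) (.plug a) B) := (SubCtx.refl _).upd_right rfl B
    have hΔ : SubCtx (plugCtx Δ) (upd (plugCtx Δ) (.sock x) A) := (SubCtx.refl _).upd_right rfl A
    have hP := ih.weaken hΓ hΔ.upd_upd
    exact .nu (.nu (.par hP (.pairOut_of_eq_some upd_self upd_self ((upd_of_ne hba').trans hb))))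
  | @imp P Q Γ Δ a y x A B hy _ _ ihP ihQ =>
    rw [plugCtx_upd] at ihP
    rw [sockCtx_upd] at ihQ
    have hΓ : SubCtx (sockCtx Γ) (upd (upd (sockCtx Γ) (.var 0) (.arrow A B)) (.var 2) B) :=
      ((SubCtx.refl _).upd_right rfl _).upd_right rfl _
    have hΔ : SubCtx (plugCtx Δ) (upd (upd (plugCtx Δ) (.var 0) (.arrow A B)) (.var 1) A) :=
      ((SubCtx.refl _).upd_right rfl _).upd_right rfl _
    have hP := ihP.weaken (hΓ.upd_right (n := .plug a) rfl A) hΔ.upd_upd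
    have hQ := ihQ.weaken hΓ.upd_upd (hΔ.upd_right (n := .sock x) rfl B)
    refine .inp_of_eq_some hy (.letp_of_eq_some upd_self (.par ?_ ?_))
    · exact .nu (.repl (.par hP (.fwd upd_self rfl)))
    · exact .nu (.repl (.par (.fwd rfl upd_self) hQ))
  | cut ha hx _ _ ihP ihQ | cutL ha hx _ _ ihP ihQ | cutR ha hx _ _ ihP ihQ =>
    rw [plugCtx_upd] at ihP
    rw [sockCtx_upd] at ihQ
    exact .encCut rfl ha hx rfl ihP ihQ

/-- The π-encoding of the X-witness of Peirce's law is typeable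
    (sockets: z=0, y=1, w=2; plugs: δ=0, η=1, α=2, γ=3). -/
theorem peirce_pi (A B : Ty) :
    TypesPi (encX (Net.exp 0 (Net.imp (Net.exp 1 (Net.cap 1 0) 1 2) 2 0 2 (Net.cap 2 0)) 0 3))
      emptyCtx
      (upd emptyCtx (PName.plug 3) (Ty.arrow (Ty.arrow (Ty.arrow A B) A) A)) := by
  have peirce : CompatTypesX
      (.exp 0 (.imp (.exp 1 (.cap 1 0) 1 2) 2 0 2 (.cap 2 0)) 0 3)
      emptyCtx (upd emptyCtx 3 (.arrow (.arrow (.arrow A B) A) A)) :=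
    .exp rfl (by decide) (.imp rfl (.exp (B := B) rfl (by decide) (.cap rfl rfl)) (.cap rfl rfl))
  simpa only [sockCtx_emptyCtx, plugCtx_upd, plugCtx_emptyCtx]
    using peirce.typesPi_encX
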